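/- For all integers m ≥ 0 and l ∈ ℤ, one has S̃_{m+1,l}(q) = q^{−l} S_{m,l+1}(q) + q^{−m} S̃_{m,l}(q) + S_{m,l−1}(q), an identity in ℤ[q, q⁻¹]. -/

import Mathlib

/-!
Termwise, the `q`-Pascal rules express the summand of `S̃_{m+1,l}` at `μ + 1` through those of
`S_{m,l+1}` and `S̃_{m,l}` at `μ` and of `S_{m,l-1}` at `μ + 1`, but with weights that depend on
`μ`. The excess over the constant weights `q^(-l)`, `q^(-m)`, `1` is
`(q^(μ-m) - 1) q^(-l) s(μ) - (1 - q^(2μ+l-m)) q^(-m) s̃(μ)`, where `s` and `s̃` are the summands of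
`S_{m,l+1}` and `S̃_{m,l}`. The absorption identities for `q`-binomial coefficients identify its
first part with its second part at `μ + 1`, so that the excess telescopes in the sum over `μ`.
-/

open LaurentPolynomial

/-- The Gaussian (q-)binomial coefficient `C(n,k)_q` as a Laurent polynomial in `q`,
defined by the q-Pascal recursion `C(n+1,k+1)_q = C(n,k)_q + q^(k+1) C(n,k+1)_q`. -/
noncomputable def qbinom : ℕ → ℕ → LaurentPolynomial ℤ
  | _, 0 => 1
  | 0, _ + 1 => 0
  | n + 1, k + 1 => qbinom n k + T ((k : ℤ) + 1) * qbinom n (k + 1)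

/-- `C(n,k)_q` for integer arguments, zero unless `0 ≤ k ≤ n`. -/
noncomputable def qbinomZ (n k : ℤ) : LaurentPolynomial ℤ :=
  if 0 ≤ k ∧ k ≤ n then qbinom n.toNat k.toNat else 0

/-- `S_{m,l}(q) = Σ_{ν∈ℤ} q^{(ν+l−m)(ν+l)+ν(ν−m)} C(m,ν)_q C(ν, m−l−ν)_q`. -/
noncomputable def Sq (m : ℕ) (l : ℤ) : LaurentPolynomial ℤ :=
  ∑ᶠ ν : ℤ,
    T ((ν + l - m) * (ν + l) + ν * (ν - m)) * (qbinomZ m ν * qbinomZ ν (m - l - ν))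

/-- `S̃_{m,l}(q) = Σ_{ν∈ℤ} q^{(ν+l−m)(ν+l−1)+ν(ν−m)} C(m,ν)_q C(ν, m−l−ν)_q`. -/
noncomputable def Sqt (m : ℕ) (l : ℤ) : LaurentPolynomial ℤ :=
  ∑ᶠ ν : ℤ,
    T ((ν + l - m) * (ν + l - 1) + ν * (ν - m)) * (qbinomZ m ν * qbinomZ ν (m - l - ν))

lemma finsum_comp_add_right {G M : Type*} [AddGroup G] [AddCommMonoid M] (f : G → M) (a : G) :
    ∑ᶠ x, f (x + a) = ∑ᶠ x, f x :=
  finsum_comp_equiv (Equiv.addRight a)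

lemma finsum_comp_add_right_sub_self {G M : Type*} [AddGroup G] [AddCommGroup M] {f : G → M}
    (hf : f.HasFiniteSupport) (a : G) : ∑ᶠ x, (f (x + a) - f x) = 0 := by
  rw [finsum_sub_distrib (hf.fun_comp_of_injective (add_left_injective a)) hf,
    finsum_comp_add_right, sub_self]

lemma T_mul_T_of_add_eq {R : Type*} [Semiring R] {a b c : ℤ} (h : a + b = c) :
    (T a * T b : R[T;T⁻¹]) = T c := by
  rw [← T_add, h]

lemma qbinom_eq_zero_of_lt : ∀ {n k : ℕ}, n < k → qbinom n k = 0
  | 0, _ + 1, _ => by rw [qbinom]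
  | n + 1, k + 1, h => by
    rw [qbinom, qbinom_eq_zero_of_lt (by lia : n < k), qbinom_eq_zero_of_lt (by lia : n < k + 1),
      mul_zero, add_zero]

lemma qbinomZ_natCast (n k : ℕ) : qbinomZ n k = qbinom n k := by
  unfold qbinomZ
  split_ifs with h
  · simp only [Int.toNat_natCast]
  · exact (qbinom_eq_zero_of_lt (by lia)).symm

lemma qbinomZ_of_neg_left {n : ℤ} (hn : n < 0) (k : ℤ) : qbinomZ n k = 0 :=
  if_neg (by lia)

lemma qbinomZ_of_neg_right (n : ℤ) {k : ℤ} (hk : k < 0) : qbinomZ n k = 0 :=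
  if_neg (by lia)

lemma qbinomZ_zero_left {k : ℤ} (hk : k ≠ 0) : qbinomZ 0 k = 0 :=
  if_neg (by lia)

lemma qbinomZ_zero_right (n : ℕ) : qbinomZ n 0 = 1 := by
  rw [← Nat.cast_zero, qbinomZ_natCast, qbinom]

lemma qbinomZ_succ_left (n : ℕ) (k : ℤ) :
    qbinomZ (n + 1) k = qbinomZ n (k - 1) + T k * qbinomZ n k := by
  obtain hk | rfl | hk := lt_trichotomy k 0
  · simp only [qbinomZ_of_neg_right _ hk, qbinomZ_of_neg_right _ (by lia : k - 1 < 0), mul_zero,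
      add_zero]
  · rw [← Nat.cast_succ, qbinomZ_zero_right, qbinomZ_zero_right, T_zero,
      qbinomZ_of_neg_right _ (by lia), one_mul, zero_add]
  · obtain ⟨i, rfl⟩ : ∃ i : ℕ, k = (i + 1 : ℕ) := ⟨(k - 1).toNat, by lia⟩
    rw [← Nat.cast_succ, Nat.cast_succ i, add_sub_cancel_right, ← Nat.cast_succ i,
      qbinomZ_natCast, qbinomZ_natCast, qbinomZ_natCast, qbinom, Nat.cast_succ]

lemma qbinomZ_succ_left' (n : ℕ) (k : ℤ) :
    qbinomZ (n + 1) k = qbinomZ n k + T (n + 1 - k) * qbinomZ n (k - 1) := by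
  induction n generalizing k with
  | zero =>
    rw [qbinomZ_succ_left, Nat.cast_zero]
    obtain rfl | h0 := eq_or_ne k 0
    · simp [qbinomZ_of_neg_right]
    obtain rfl | h1 := eq_or_ne k 1
    · simp [qbinomZ_zero_left]
    · simp only [qbinomZ_zero_left h0, qbinomZ_zero_left (sub_ne_zero.2 h1), mul_zero]
  | succ n ih =>
    have hk : (T k * T (n + 1 - k) : ℤ[T;T⁻¹]) = T (n + 1) := T_mul_T_of_add_eq (by ring)
    have hk' : (T (n + 1 + 1 - k) * T (k - 1) : ℤ[T;T⁻¹]) = T (n + 1) :=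
      T_mul_T_of_add_eq (by ring)
    have ih' := ih (k - 1)
    rw [show (n : ℤ) + 1 - (k - 1) = n + 1 + 1 - k by ring] at ih'
    rw [qbinomZ_succ_left, Nat.cast_succ]
    linear_combination ih' + T k * ih k - qbinomZ_succ_left n k
      - T (n + 1 + 1 - k) * qbinomZ_succ_left n (k - 1)
      + qbinomZ n (k - 1) * hk - qbinomZ n (k - 1) * hk'

-- Both absorption identities arise by eliminating a term between the two `q`-Pascal rules.
lemma one_sub_T_mul_qbinomZ_succ_left (n k : ℤ) :
    (1 - T (n + 1 - k)) * qbinomZ (n + 1) k = (1 - T (n + 1)) * qbinomZ n k := by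
  obtain hn | rfl | hn : 0 ≤ n ∨ n = -1 ∨ n + 1 < 0 := by lia
  · lift n to ℕ using hn
    have hk : (T (n + 1 - k) * T k : ℤ[T;T⁻¹]) = T (n + 1) := T_mul_T_of_add_eq (by ring)
    linear_combination qbinomZ_succ_left' n k - T (n + 1 - k) * qbinomZ_succ_left n k
      - qbinomZ n k * hk
  · obtain rfl | hk := eq_or_ne k 0
    · simp
    · simp [qbinomZ_zero_left hk]
  · rw [qbinomZ_of_neg_left hn, qbinomZ_of_neg_left (by lia), mul_zero, mul_zero]

lemma one_sub_T_mul_qbinomZ_succ_right (n k : ℤ) :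
    (1 - T (k + 1)) * qbinomZ n (k + 1) = (1 - T (n - k)) * qbinomZ n k := by
  obtain hn | hn := lt_or_ge n 0
  · rw [qbinomZ_of_neg_left hn, qbinomZ_of_neg_left hn, mul_zero, mul_zero]
  · lift n to ℕ using hn
    have pascal := qbinomZ_succ_left n (k + 1)
    have pascal' := qbinomZ_succ_left' n (k + 1)
    rw [add_sub_cancel_right] at pascal pascal'
    rw [add_sub_add_right_eq_sub] at pascal'
    linear_combination pascal - pascal'

lemma one_sub_T_mul_qbinomZ_mul_qbinomZ_succ (n μ k : ℤ) :
    (1 - T (μ + 1 - k)) * (qbinomZ n (μ + 1) * qbinomZ (μ + 1) k) =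
      (1 - T (n - μ)) * (qbinomZ n μ * qbinomZ μ k) := by
  linear_combination qbinomZ n (μ + 1) * one_sub_T_mul_qbinomZ_succ_left μ k
    + qbinomZ μ k * one_sub_T_mul_qbinomZ_succ_right n μ

lemma qbinomZ_succ_mul_qbinomZ_succ (m : ℕ) (μ k : ℤ) :
    qbinomZ (m + 1) (μ + 1) * qbinomZ (μ + 1) k =
      T (μ + 1 - k) * (qbinomZ m μ * qbinomZ μ (k - 1)) + qbinomZ m μ * qbinomZ μ k
        + T (μ + 1) * (qbinomZ m (μ + 1) * qbinomZ (μ + 1) k) := by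
  have lower : qbinomZ m μ * qbinomZ (μ + 1) k =
      qbinomZ m μ * (qbinomZ μ k + T (μ + 1 - k) * qbinomZ μ (k - 1)) := by
    obtain hμ | hμ := lt_or_ge μ 0
    · rw [qbinomZ_of_neg_right _ hμ, zero_mul, zero_mul]
    · lift μ to ℕ using hμ
      rw [qbinomZ_succ_left']
  have upper := qbinomZ_succ_left m (μ + 1)
  rw [add_sub_cancel_right] at upper
  linear_combination qbinomZ (μ + 1) k * upper + lower

/-- The summand at `ν` of the Andrews–Baxter `q`-trinomial coefficient
`∑_j q^(j(j+B)) C(m,j) C(m-j,j+l)`, with `q` replaced by `q⁻¹` and the sum indexed by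
`ν = m - l - j`. It gives `S_{m,l}` for `B = l` and `S̃_{m,l}` for `B = l - 1`. -/
noncomputable def qtrinomTerm (m : ℕ) (l B ν : ℤ) : ℤ[T;T⁻¹] :=
  T ((ν + l - m) * (ν + B) + ν * (ν - m)) * (qbinomZ m ν * qbinomZ ν (m - l - ν))

lemma Sq_eq_finsum (m : ℕ) (l : ℤ) : Sq m l = ∑ᶠ ν, qtrinomTerm m l l ν := rfl

lemma Sqt_eq_finsum (m : ℕ) (l : ℤ) : Sqt m l = ∑ᶠ ν, qtrinomTerm m l (l - 1) ν := by
  simp only [Sqt, qtrinomTerm, add_sub_assoc]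

@[fun_prop]
lemma hasFiniteSupport_qtrinomTerm (m : ℕ) (l B : ℤ) :
    (qtrinomTerm m l B).HasFiniteSupport := by
  refine (Set.finite_Icc (0 : ℤ) m).subset fun ν hν => ?_
  by_contra h
  have hm : qbinomZ m ν = 0 := if_neg h
  exact hν (by rw [qtrinomTerm, hm, zero_mul, mul_zero])

lemma qtrinomTerm_succ (m : ℕ) (l B μ : ℤ) :
    qtrinomTerm (m + 1) l B (μ + 1) =
      T (μ - m - B - 1) * qtrinomTerm m (l + 1) (B + 2) μ
        + T (2 * μ + l - 2 * m) * qtrinomTerm m l B μ + qtrinomTerm m (l - 1) B (μ + 1) := by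
  unfold qtrinomTerm
  rw [Nat.cast_succ, qbinomZ_succ_mul_qbinomZ_succ]
  simp only [mul_add, ← mul_assoc, ← T_add]
  ring_nf

/-- The function of `μ` whose differences turn the `μ`-dependent weights of `qtrinomTerm_succ`
into the constant ones of the recursion. The factor `1 - q^(2μ+l-m)` is `1 - q^(μ-j)` for the
lower index `j = m - l - μ` of `C(μ,j)`. -/
noncomputable def qtrinomTelescoper (m : ℕ) (l B μ : ℤ) : ℤ[T;T⁻¹] :=
  T (-(m : ℤ)) * (1 - T (2 * μ + l - m)) * qtrinomTerm m l B μ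

lemma qtrinomTelescoper_succ (m : ℕ) (l B μ : ℤ) :
    qtrinomTelescoper m l B (μ + 1) =
      T (-l) * (T (μ - m) - 1) * qtrinomTerm m (l + 1) (B + 2) μ := by
  have absorb := congr_arg (T (-m + (μ + 1 + l - m) * (μ + 1 + B) + (μ + 1) * (μ + 1 - m)) * ·)
    (one_sub_T_mul_qbinomZ_mul_qbinomZ_succ m μ (m - l - (μ + 1)))
  unfold qtrinomTelescoper qtrinomTerm
  simp only [mul_sub, sub_mul, mul_one, one_mul, ← mul_assoc, ← T_add] at absorb ⊢
  ring_nf at absorb ⊢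
  exact absorb

@[fun_prop]
lemma hasFiniteSupport_qtrinomTelescoper (m : ℕ) (l B : ℤ) :
    (qtrinomTelescoper m l B).HasFiniteSupport := by
  unfold qtrinomTelescoper
  fun_prop

lemma qtrinomTerm_succ_sub_one (m : ℕ) (l μ : ℤ) :
    qtrinomTerm (m + 1) l (l - 1) (μ + 1) =
      T (-l) * qtrinomTerm m (l + 1) (l + 1) μ + T (-(m : ℤ)) * qtrinomTerm m l (l - 1) μ
        + qtrinomTerm m (l - 1) (l - 1) (μ + 1)
        + (qtrinomTelescoper m l (l - 1) (μ + 1) - qtrinomTelescoper m l (l - 1) μ) := by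
  have weight₁ : (T (-l) * T (μ - m) : ℤ[T;T⁻¹]) = T (μ - m - (l - 1) - 1) :=
    T_mul_T_of_add_eq (by ring)
  have weight₂ : (T (-(m : ℤ)) * T (2 * μ + l - m) : ℤ[T;T⁻¹]) = T (2 * μ + l - 2 * m) :=
    T_mul_T_of_add_eq (by ring)
  rw [qtrinomTerm_succ, qtrinomTelescoper_succ, qtrinomTelescoper, ← weight₁, ← weight₂,
    show l - 1 + 2 = l + 1 by ring]
  ring

/-- St_{m+1,l} = q^{-l} S_{m,l+1} + q^{-m} St_{m,l} + S_{m,l-1}. -/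
theorem St_succ_rec2 (m : ℕ) (l : ℤ) :
    Sqt (m + 1) l =
      T (-l) * Sq m (l + 1) + T (-(m : ℤ)) * Sqt m l + Sq m (l - 1) := by
  have shift_inj : Function.Injective fun μ : ℤ => μ + 1 := add_left_injective 1
  simp only [Sq_eq_finsum, Sqt_eq_finsum]
  calc ∑ᶠ μ, qtrinomTerm (m + 1) l (l - 1) μ
    _ = ∑ᶠ μ, qtrinomTerm (m + 1) l (l - 1) (μ + 1) := (finsum_comp_add_right _ 1).symm
    _ = ∑ᶠ μ, (T (-l) * qtrinomTerm m (l + 1) (l + 1) μ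
          + T (-(m : ℤ)) * qtrinomTerm m l (l - 1) μ + qtrinomTerm m (l - 1) (l - 1) (μ + 1)
          + (qtrinomTelescoper m l (l - 1) (μ + 1) - qtrinomTelescoper m l (l - 1) μ)) :=
        finsum_congr (qtrinomTerm_succ_sub_one m l)
    _ = ∑ᶠ μ, T (-l) * qtrinomTerm m (l + 1) (l + 1) μ
          + ∑ᶠ μ, T (-(m : ℤ)) * qtrinomTerm m l (l - 1) μ
          + ∑ᶠ μ, qtrinomTerm m (l - 1) (l - 1) (μ + 1) := by
        repeat rw [finsum_add_distrib (by fun_prop (disch := assumption))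
          (by fun_prop (disch := assumption))]
        rw [finsum_comp_add_right_sub_self (by fun_prop), add_zero]
    _ = _ := by rw [mul_finsum, mul_finsum, finsum_comp_add_right]
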